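/- For s > 0, (1/π) ∫_ℝ (1/(s² + x²)) (Γ'/Γ)(1 + ix) dx = (1/s) (Γ'/Γ)(1 + s). -/

import Mathlib

/-!
Let `ψ = Γ' / Γ` and `0 < s.re`. The function `(ψ (1 + z) - ψ (1 + s)) / (z ^ 2 - s ^ 2)` is
holomorphic on the closed right half-plane, the singularity at `s` being removable, and it is
`o(1 / |z|)` there because `ψ (1 + z)` grows sublinearly. By Cauchy's theorem its integral along the
imaginary axis vanishes, which reduces the claim to `∫ dx / (s ^ 2 + x ^ 2) = π / s`.

The growth of `ψ` is read off from the logarithmic derivative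
`ψ (1 + z) = -γ - ∑ (1 / (n + 1 + z) - 1 / (n + 1))` of the Weierstrass product of `1 / Γ`, whose
terms are at most `|z| ^ θ / (n + 1) ^ (1 + θ)` for every `0 ≤ θ ≤ 1`.
-/

open Real Complex

/-- The digamma function `Γ'/Γ`. -/
noncomputable def digammaC (z : ℂ) : ℂ := deriv Complex.Gamma z / Complex.Gamma z

open scoped Interval
open Asymptotics Bornology Filter MeasureTheory Set Topology

section HalfPlane

variable {E : Type*} [NormedAddCommGroup E] [NormedSpace ℂ E]

theorem norm_intervalIntegral_imaginaryAxis_le {F : ℂ → E} {R M : ℝ}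
    (hF : DiffContOnCl ℂ F {z | 0 < z.re}) (hR : 0 ≤ R)
    (hM : ∀ z : ℂ, 0 ≤ z.re → R ≤ ‖z‖ → ‖F z‖ ≤ M) :
    ‖∫ x in -R..R, F (I * (x : ℂ))‖ ≤ 4 * R * M := by
  have hcont : ContinuousOn F ([[0, R]] ×ℂ [[-R, R]]) := hF.continuousOn.mono fun z hz => by
    rw [closure_setOfPred_lt_re]
    exact (uIcc_of_le hR ▸ hz.1).1
  have hdiff : DifferentiableOn ℂ F (Ioo (min 0 R) (max 0 R) ×ℂ Ioo (min (-R) R) (max (-R) R)) :=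
    hF.differentiableOn.mono fun z hz => (min_eq_left hR ▸ hz.1).1
  have hcauchy := integral_boundary_rect_eq_zero_of_continuousOn_of_differentiableOn F
    ⟨0, -R⟩ ⟨R, R⟩ hcont hdiff
  have hhorizontal (y : ℝ) (hy : |y| = R) : ‖∫ x in (0 : ℝ)..R, F (x + y * I)‖ ≤ M * R := by
    refine (intervalIntegral.norm_integral_le_of_norm_le_const fun x hx => hM _ ?_ ?_).trans_eq ?_
    · simpa using (uIoc_of_le hR ▸ hx).1.le
    · simpa [hy] using abs_im_le_norm (x + y * I)
    · rw [sub_zero, abs_of_nonneg hR]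
  have hvertical : ‖∫ y in -R..R, F (R + y * I)‖ ≤ M * (2 * R) := by
    refine (intervalIntegral.norm_integral_le_of_norm_le_const fun y _ => hM _ ?_ ?_).trans_eq ?_
    · simpa using hR
    · simpa [abs_of_nonneg hR] using abs_re_le_norm (R + y * I)
    · rw [sub_neg_eq_add, ← two_mul, abs_of_nonneg (by positivity)]
  have haxis : I • ∫ x in -R..R, F (I * x) =
      (∫ x in (0 : ℝ)..R, F (x + (-R : ℝ) * I)) - (∫ x in (0 : ℝ)..R, F (x + R * I)) +
        I • ∫ y in -R..R, F (R + y * I) := by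
    rw [← sub_eq_zero, ← neg_eq_zero, neg_sub, ← hcauchy]
    simp [mul_comm I]
  calc ‖∫ x in -R..R, F (I * x)‖ = ‖I • ∫ x in -R..R, F (I * x)‖ := by
        rw [norm_smul, norm_I, one_mul]
    _ ≤ M * R + M * R + M * (2 * R) := by
        rw [haxis]
        refine (norm_add_le _ _).trans (add_le_add ((norm_sub_le _ _).trans (add_le_add
          (hhorizontal _ ?_) (hhorizontal _ ?_))) ?_)
        · rw [abs_neg, abs_of_nonneg hR]
        · exact abs_of_nonneg hR
        · rwa [norm_smul, norm_I, one_mul]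
    _ = 4 * R * M := by ring

theorem integral_imaginaryAxis_eq_zero {F : ℂ → E} (hF : DiffContOnCl ℂ F {z | 0 < z.re})
    (hdecay : F =o[cobounded ℂ ⊓ 𝓟 {z | 0 ≤ z.re}] fun z => ‖z‖⁻¹)
    (hint : Integrable fun x : ℝ => F (I * x)) :
    ∫ x : ℝ, F (I * x) = 0 := by
  have hlim : Tendsto (fun R : ℝ => ∫ x in -R..R, F (I * x)) atTop (𝓝 (∫ x : ℝ, F (I * x))) :=
    intervalIntegral_tendsto_integral hint tendsto_neg_atTop_atBot tendsto_id
  refine tendsto_nhds_unique hlim (Metric.tendsto_nhds.2 fun ε hε => ?_)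
  have hbound : ∀ᶠ R : ℝ in atTop, ∀ z : ℂ, R ≤ ‖z‖ → 0 ≤ z.re → ‖F z‖ ≤ ε / 5 * ‖z‖⁻¹ := by
    have := eventually_inf_principal.1 (hdecay.def (c := ε / 5) (by positivity))
    rw [← comap_norm_atTop, eventually_comap] at this
    filter_upwards [eventually_forall_ge_atTop.2 this] with R hR z hz hre
    simpa using hR _ hz z rfl hre
  filter_upwards [hbound, eventually_gt_atTop 0] with R hR hR0
  rw [dist_zero_right]
  calc ‖∫ x in -R..R, F (I * x)‖ ≤ 4 * R * (ε / 5 * R⁻¹) :=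
        norm_intervalIntegral_imaginaryAxis_le hF hR0.le fun z hre hz =>
          (hR z hz hre).trans (by gcongr)
    _ = 4 * ε / 5 := by field_simp
    _ < ε := by linarith

end HalfPlane

section PoissonKernel

theorem add_ne_zero_of_re_nonneg {z s : ℂ} (hz : 0 ≤ z.re) (hs : 0 < s.re) : z + s ≠ 0 :=
  fun h => (add_pos_of_nonneg_of_pos hz hs).ne' (by simpa using congrArg re h)

theorem diffContOnCl_inv_add_const {s : ℂ} (hs : 0 < s.re) :
    DiffContOnCl ℂ (fun z => (z + s)⁻¹) {z | 0 < z.re} := by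
  refine (Differentiable.diffContOnCl (by fun_prop)).inv fun z hz =>
    add_ne_zero_of_re_nonneg ?_ hs
  rwa [closure_setOfPred_lt_re] at hz

theorem isBigO_inv_add_const {𝕜 : Type*} [NormedField 𝕜] (c : 𝕜) :
    (fun z => (z + c)⁻¹) =O[cobounded 𝕜] fun z => ‖z‖⁻¹ :=
  ((IsEquivalent.refl (u := id)).add_isLittleO (isLittleO_const_id_cobounded c)).inv.isBigO.trans
    (isBigO_of_le _ fun z => by simp)

theorem tendsto_I_mul_ofReal_cobounded :
    Tendsto (fun x : ℝ => I * (x : ℂ)) (cobounded ℝ) (cobounded ℂ) := by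
  rw [← tendsto_norm_atTop_iff_cobounded]
  simpa only [norm_mul, norm_I, one_mul, norm_real] using tendsto_norm_cobounded_atTop (E := ℝ)

theorem isBigO_inv_I_mul_add_const (c : ℂ) :
    (fun x : ℝ => (I * x + c)⁻¹) =O[cobounded ℝ] fun x => |x|⁻¹ := by
  simpa [Function.comp_def] using
    (isBigO_inv_add_const c).comp_tendsto tendsto_I_mul_ofReal_cobounded

theorem sq_add_sq_eq_mul (s : ℂ) (x : ℝ) :
    s ^ 2 + (x : ℂ) ^ 2 = (I * x + s) * (-(I * x) + s) := by
  linear_combination (x : ℂ) ^ 2 * I_sq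

theorem inv_sq_add_sq_eq_neg_mul (s : ℂ) (x : ℝ) :
    (s ^ 2 + (x : ℂ) ^ 2)⁻¹ = -((I * x + s)⁻¹ * (I * x + -s)⁻¹) := by
  rw [sq_add_sq_eq_mul, mul_inv, show -(I * (x : ℂ)) + s = -(I * x + -s) by ring, inv_neg, mul_neg]

theorem continuous_inv_sq_add_sq {s : ℂ} (hs : 0 < s.re) :
    Continuous fun x : ℝ => (s ^ 2 + (x : ℂ) ^ 2)⁻¹ :=
  Continuous.inv₀ (by fun_prop) fun x => sq_add_sq_eq_mul s x ▸ mul_ne_zero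
    (add_ne_zero_of_re_nonneg (by simp) hs) (add_ne_zero_of_re_nonneg (by simp) hs)

theorem integrable_of_isBigO_abs_rpow {E : Type*} [NormedAddCommGroup E] {f : ℝ → E} {p : ℝ}
    (hf : Continuous f) (hp : p < -1) (hO : f =O[cobounded ℝ] fun x => |x| ^ p) :
    Integrable f := by
  have hint : Integrable fun x : ℝ => (1 + |x|) ^ p := by
    simpa using integrable_one_add_norm (E := ℝ) (μ := volume) (r := -p) (by simp; linarith)
  refine hf.locallyIntegrable.integrable_of_isBigO_cocompact
    (g := fun x : ℝ => (1 + |x|) ^ p) ?_ (hint.integrableAtFilter _)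
  rw [← Metric.cobounded_eq_cocompact]
  refine hO.trans (.of_bound ((1 / 2) ^ p) ?_)
  filter_upwards [tendsto_norm_cobounded_atTop.eventually_ge_atTop 1] with x hx
  rw [Real.norm_eq_abs] at hx
  rw [Real.norm_of_nonneg (by positivity), Real.norm_of_nonneg (by positivity),
    ← Real.mul_rpow (by norm_num) (by positivity)]
  exact Real.rpow_le_rpow_of_nonpos (by positivity) (by linarith) (by linarith)

variable {E : Type*} [NormedAddCommGroup E] [NormedSpace ℂ E]

theorem integrable_inv_sq_add_sq_smul {f : ℝ → E} {s : ℂ} {r : ℝ} (hs : 0 < s.re)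
    (hf : Continuous f) (hr : r < 1) (hO : f =O[cobounded ℝ] fun x => |x| ^ r) :
    Integrable fun x : ℝ => (s ^ 2 + (x : ℂ) ^ 2)⁻¹ • f x := by
  refine integrable_of_isBigO_abs_rpow (p := r - 2) ((continuous_inv_sq_add_sq hs).smul hf)
    (by linarith) ?_
  simp_rw [inv_sq_add_sq_eq_neg_mul]
  refine (((isBigO_inv_I_mul_add_const s).mul
    (isBigO_inv_I_mul_add_const (-s))).neg_left.smul hO).trans_eventuallyEq ?_
  filter_upwards [tendsto_norm_cobounded_atTop.eventually_gt_atTop 0] with x hx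
  rw [Real.norm_eq_abs] at hx
  rw [Real.rpow_sub hx, Real.rpow_two, smul_eq_mul]
  field_simp

theorem integrable_inv_sq_add_sq {s : ℂ} (hs : 0 < s.re) :
    Integrable fun x : ℝ => (s ^ 2 + (x : ℂ) ^ 2)⁻¹ := by
  simpa using integrable_inv_sq_add_sq_smul (f := fun _ => (1 : ℂ)) hs continuous_const zero_lt_one
    (by simpa using isBigO_refl (fun _ : ℝ => (1 : ℂ)) _)

theorem integrable_inv_add_mul_inv_add {s t : ℂ} (hs : 0 < s.re) (ht : 0 < t.re) :
    Integrable fun x : ℝ => (I * x + s)⁻¹ * (I * x + t)⁻¹ := by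
  refine integrable_of_isBigO_abs_rpow (p := -2) (.mul ?_ ?_) (by norm_num)
    (((isBigO_inv_I_mul_add_const s).mul (isBigO_inv_I_mul_add_const t)).congr_right fun x => ?_)
  · exact .inv₀ (by fun_prop) fun x => add_ne_zero_of_re_nonneg (by simp) hs
  · exact .inv₀ (by fun_prop) fun x => add_ne_zero_of_re_nonneg (by simp) ht
  · rw [Real.rpow_neg (abs_nonneg x), Real.rpow_two, pow_two, mul_inv]

theorem integral_inv_add_mul_inv_add_eq_zero {s t : ℂ} (hs : 0 < s.re) (ht : 0 < t.re) :
    ∫ x : ℝ, (I * x + s)⁻¹ * (I * x + t)⁻¹ = 0 := by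
  refine integral_imaginaryAxis_eq_zero (F := fun z => (z + s)⁻¹ * (z + t)⁻¹)
    ((diffContOnCl_inv_add_const hs).smul (diffContOnCl_inv_add_const ht)) ?_
    (integrable_inv_add_mul_inv_add hs ht)
  have hinv : (fun z : ℂ => (z + t)⁻¹) =o[cobounded ℂ] fun _ => (1 : ℝ) :=
    (isBigO_inv_add_const t).trans_isLittleO
      ((isLittleO_one_iff ℝ).2 tendsto_norm_cobounded_atTop.inv_tendsto_atTop)
  simpa using ((isBigO_inv_add_const s).mul_isLittleO hinv).mono inf_le_left

-- The difference of `s / (s ^ 2 + x ^ 2)` and `1 / (1 + x ^ 2)` is the even part of a rational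
-- function without poles in the closed right half-plane, whence it integrates to zero.
theorem integral_univ_inv_sq_add_sq {s : ℂ} (hs : 0 < s.re) :
    ∫ x : ℝ, (s ^ 2 + (x : ℂ) ^ 2)⁻¹ = π / s := by
  have hs0 : s ≠ 0 := fun h => by simp [h] at hs
  have hone : 0 < (1 : ℂ).re := by simp
  let F : ℝ → ℂ := fun x => (I * x + s)⁻¹ * (I * x + 1)⁻¹
  have hF : Integrable F := integrable_inv_add_mul_inv_add hs hone
  have hreal : Integrable fun x : ℝ => (((1 + x ^ 2)⁻¹ : ℝ) : ℂ) := integrable_inv_one_add_sq.ofReal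
  have hF_neg : Integrable fun x => F (-x) := hF.comp_neg
  have hF_even : Integrable fun x => F x + F (-x) := hF.add hF_neg
  have hzero : ∫ x, F x = 0 := integral_inv_add_mul_inv_add_eq_zero hs hone
  have hsplit (x : ℝ) : (s ^ 2 + (x : ℂ) ^ 2)⁻¹ =
      s⁻¹ * (((1 + x ^ 2)⁻¹ : ℝ) + (1 - s) / 2 * (F x + F (-x))) := by
    have hxs := add_ne_zero_of_re_nonneg (z := I * x) (by simp) hs
    have hxs' := add_ne_zero_of_re_nonneg (z := -(I * x)) (by simp) hs
    have hx1 := add_ne_zero_of_re_nonneg (z := I * x) (by simp) hone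
    have hx1' := add_ne_zero_of_re_nonneg (z := -(I * x)) (by simp) hone
    have hfactor := sq_add_sq_eq_mul 1 x
    rw [one_pow] at hfactor
    simp only [F]
    push_cast
    rw [sq_add_sq_eq_mul, hfactor, mul_neg]
    field_simp
    ring
  simp_rw [hsplit]
  rw [integral_const_mul, integral_add hreal (hF_even.const_mul _),
    integral_const_mul, integral_add hF hF_neg, integral_neg_eq_self F, hzero,
    integral_complex_ofReal, integral_univ_inv_one_add_sq]
  field_simp
  ring

theorem integral_univ_inv_sq_add_sq_smul [CompleteSpace E] {f : ℂ → E} {s : ℂ} (hs : 0 < s.re)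
    (hf : DiffContOnCl ℂ f {z | 0 < z.re})
    (hgrowth : f =o[cobounded ℂ ⊓ 𝓟 {z | 0 ≤ z.re}] fun z => ‖z‖)
    (hint : Integrable fun x : ℝ => (s ^ 2 + (x : ℂ) ^ 2)⁻¹ • f (I * x)) :
    ∫ x : ℝ, (s ^ 2 + (x : ℂ) ^ 2)⁻¹ • f (I * x) = (π / s) • f s := by
  let G : ℂ → E := fun z => (z + s)⁻¹ • dslope f s z
  have hnhds : {z : ℂ | 0 < z.re} ∈ 𝓝 s := (isOpen_re_gt 0).mem_nhds hs
  have hG : DiffContOnCl ℂ G {z | 0 < z.re} :=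
    (diffContOnCl_inv_add_const hs).smul ⟨(differentiableOn_dslope hnhds).2 hf.1,
      (continuousOn_dslope (mem_of_superset hnhds subset_closure)).2
        ⟨hf.2, hf.1.differentiableAt hnhds⟩⟩
  have hdecay : G =o[cobounded ℂ ⊓ 𝓟 {z | 0 ≤ z.re}] fun z => ‖z‖⁻¹ := by
    have hinv : (fun z => (z + s)⁻¹ * (z + -s)⁻¹) =O[cobounded ℂ] fun z => ‖z‖⁻¹ * ‖z‖⁻¹ :=
      (isBigO_inv_add_const s).mul (isBigO_inv_add_const (-s))
    have hsub : (fun z => f z - f s) =o[cobounded ℂ ⊓ 𝓟 {z | 0 ≤ z.re}] fun z => ‖z‖ :=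
      hgrowth.sub ((isLittleO_const_id_cobounded (f s)).norm_right.mono inf_le_left)
    refine ((hinv.mono inf_le_left).smul_isLittleO hsub).congr' ?_ ?_
    · filter_upwards [mem_inf_of_left (eventually_ne_cobounded s)] with z hz
      rw [mul_smul, ← sub_eq_add_neg, ← slope_def_module, ← dslope_of_ne _ hz]
    · filter_upwards [mem_inf_of_left (eventually_ne_cobounded 0)] with z hz
      rw [smul_eq_mul, mul_assoc, inv_mul_cancel₀ (norm_ne_zero_iff.2 hz), mul_one]
  have haxis (x : ℝ) : G (I * x) =
      (s ^ 2 + (x : ℂ) ^ 2)⁻¹ • f s - (s ^ 2 + (x : ℂ) ^ 2)⁻¹ • f (I * x) := by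
    have hne : I * (x : ℂ) ≠ s := fun h => hs.ne (by simpa using congrArg re h)
    rw [← smul_sub, inv_sq_add_sq_eq_neg_mul, ← neg_sub (f (I * x)), smul_neg, neg_smul, neg_neg,
      mul_smul, ← sub_eq_add_neg]
    simp only [G, dslope_of_ne _ hne, slope_def_module]
  have hconst := (integrable_inv_sq_add_sq hs).smul_const (f s)
  have hzero := integral_imaginaryAxis_eq_zero hG hdecay
    ((hconst.sub hint).congr (.of_forall fun x => (haxis x).symm))
  simp_rw [haxis] at hzero
  rw [integral_sub hconst hint, integral_smul_const, integral_univ_inv_sq_add_sq hs] at hzero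
  exact (sub_eq_zero.1 hzero).symm

end PoissonKernel

section Weierstrass

theorem norm_one_add_mul_exp_neg_sub_one_le {u : ℂ} (hu : ‖u‖ ≤ 1) :
    ‖(1 + u) * cexp (-u) - 1‖ ≤ 3 * ‖u‖ ^ 2 := by
  have hexp : ‖cexp (-u) - 1 - -u‖ ≤ ‖u‖ ^ 2 := by
    simpa using norm_exp_sub_one_sub_id_le (x := -u) (by simpa using hu)
  calc ‖(1 + u) * cexp (-u) - 1‖ = ‖(1 + u) * (cexp (-u) - 1 - -u) - u ^ 2‖ := by
        congr 1; ring
    _ ≤ (‖(1 : ℂ)‖ + ‖u‖) * ‖u‖ ^ 2 + ‖u‖ ^ 2 := by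
        rw [← norm_pow u]
        refine (norm_sub_le _ _).trans (add_le_add_left ?_ _)
        rw [norm_mul, norm_pow]
        gcongr
        exact norm_add_le _ _
    _ ≤ (1 + 1) * ‖u‖ ^ 2 + ‖u‖ ^ 2 := by rw [norm_one]; gcongr
    _ = 3 * ‖u‖ ^ 2 := by ring

/-- The `(n + 1)`-st factor `(1 + z / (n + 1)) * exp (-z / (n + 1))` of the Weierstrass product of
the entire function `exp (-γ * z) / Γ (z + 1)`. -/
noncomputable def weierstrassFactor (n : ℕ) (z : ℂ) : ℂ :=
  (1 + z / (n + 1)) * cexp (-(z / (n + 1)))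

theorem differentiable_weierstrassFactor (n : ℕ) : Differentiable ℂ (weierstrassFactor n) := by
  unfold weierstrassFactor
  fun_prop

theorem weierstrassFactor_eq_zero_iff {n : ℕ} {z : ℂ} :
    weierstrassFactor n z = 0 ↔ z = -(n + 1) := by
  have hn : (n + 1 : ℂ) ≠ 0 := n.cast_add_one_ne_zero
  rw [weierstrassFactor, mul_eq_zero, or_iff_left (Complex.exp_ne_zero _), add_comm,
    add_eq_zero_iff_eq_neg, div_eq_iff hn, neg_one_mul]

theorem logDeriv_cexp_comp {g : ℂ → ℂ} {z : ℂ} (hg : DifferentiableAt ℂ g z) :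
    logDeriv (fun w => cexp (g w)) z = deriv g z := by
  rw [logDeriv_apply, hg.hasDerivAt.cexp.deriv, mul_div_cancel_left₀ _ (Complex.exp_ne_zero _)]

theorem logDeriv_weierstrassFactor {n : ℕ} {z : ℂ} (hz : z ≠ -(n + 1)) :
    logDeriv (weierstrassFactor n) z = (z + (n + 1))⁻¹ - (n + 1 : ℂ)⁻¹ := by
  have hn : (n + 1 : ℂ) ≠ 0 := n.cast_add_one_ne_zero
  have hlinear : logDeriv (fun w : ℂ => 1 + w / (n + 1)) z = (z + (n + 1))⁻¹ := by
    rw [logDeriv_apply, (((hasDerivAt_id' z).div_const _).const_add 1).deriv, one_add_div hn,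
      div_div_div_cancel_right₀ hn, one_div, add_comm]
  have hexp : logDeriv (fun w : ℂ => cexp (-(w / (n + 1)))) z = -(n + 1 : ℂ)⁻¹ := by
    rw [logDeriv_cexp_comp (by fun_prop), ((hasDerivAt_id' z).div_const _).fun_neg.deriv, one_div]
  have hne := weierstrassFactor_eq_zero_iff.not.2 hz
  rw [sub_eq_add_neg, ← hlinear, ← hexp]
  exact logDeriv_mul z (left_ne_zero_of_mul hne) (right_ne_zero_of_mul hne) (by fun_prop)
    (by fun_prop)

theorem norm_weierstrassFactor_sub_one_le {n : ℕ} {z : ℂ} (hz : ‖z‖ ≤ n + 1) :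
    ‖weierstrassFactor n z - 1‖ ≤ 3 * ‖z‖ ^ 2 * ((n + 1 : ℝ) ^ 2)⁻¹ := by
  have hnorm : ‖z / (n + 1)‖ = ‖z‖ / (n + 1) := by
    rw [norm_div]; norm_cast
  calc ‖weierstrassFactor n z - 1‖ ≤ 3 * ‖z / (n + 1)‖ ^ 2 :=
        norm_one_add_mul_exp_neg_sub_one_le (by rwa [hnorm, div_le_one (by positivity)])
    _ = 3 * ‖z‖ ^ 2 * ((n + 1 : ℝ) ^ 2)⁻¹ := by rw [hnorm, div_pow, mul_div_assoc', div_eq_mul_inv]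

theorem summable_inv_nat_add_one_sq : Summable fun n : ℕ => ((n + 1 : ℝ) ^ 2)⁻¹ := by
  exact_mod_cast (summable_nat_add_iff 1).2 (Real.summable_nat_pow_inv.2 one_lt_two)

theorem multipliableLocallyUniformlyOn_weierstrassFactor (R : ℝ) :
    MultipliableLocallyUniformlyOn weierstrassFactor (Metric.ball 0 R) := by
  have hbound : ∀ᶠ n : ℕ in atTop, ∀ z ∈ Metric.ball (0 : ℂ) R,
      ‖weierstrassFactor n z - 1‖ ≤ 3 * R ^ 2 * ((n + 1 : ℝ) ^ 2)⁻¹ := by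
    filter_upwards [tendsto_natCast_atTop_atTop.eventually_ge_atTop R] with n hn z hz
    rw [mem_ball_zero_iff] at hz
    exact (norm_weierstrassFactor_sub_one_le (by linarith)).trans (by gcongr)
  simpa using (summable_inv_nat_add_one_sq.mul_left _).multipliableLocallyUniformlyOn_nat_one_add
    Metric.isOpen_ball hbound fun n => by
      have := (differentiable_weierstrassFactor n).continuous
      fun_prop

theorem prod_range_weierstrassFactor {n : ℕ} (hn : n ≠ 0) (z : ℂ) :
    ∏ k ∈ Finset.range (n + 1), weierstrassFactor k z =
      n / (n + 1) * cexp (-z * ((harmonic (n + 1) - Real.log n : ℝ) : ℂ)) /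
        Complex.GammaSeq (z + 1) n := by
  have hn' : (n : ℂ) ≠ 0 := Nat.cast_ne_zero.2 hn
  have hlinear : ∏ k ∈ Finset.range (n + 1), (1 + z / (k + 1)) =
      (∏ k ∈ Finset.range (n + 1), (z + 1 + k)) / (n + 1).factorial := by
    rw [← Finset.prod_range_add_one_eq_factorial, Nat.cast_prod, ← Finset.prod_div_distrib]
    refine Finset.prod_congr rfl fun k _ => ?_
    have : (k + 1 : ℂ) ≠ 0 := k.cast_add_one_ne_zero
    push_cast
    field_simp
    ring
  have hexp : ∏ k ∈ Finset.range (n + 1), cexp (-(z / (k + 1))) =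
      cexp (-z * ((harmonic (n + 1) - Real.log n : ℝ) : ℂ)) * ((n : ℂ) ^ z)⁻¹ := by
    rw [← Complex.exp_sum, cpow_def_of_ne_zero hn', ← Complex.exp_neg, ← Complex.exp_add]
    congr 1
    simp only [harmonic, div_eq_mul_inv]
    push_cast
    rw [Finset.sum_neg_distrib, ← Finset.mul_sum]
    ring
  simp_rw [weierstrassFactor]
  rw [Finset.prod_mul_distrib, hlinear, hexp, Complex.GammaSeq, cpow_add _ _ hn', cpow_one,
    Nat.factorial_succ]
  push_cast
  field_simp

theorem tendsto_harmonic_add_one_sub_log :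
    Tendsto (fun n : ℕ => (harmonic (n + 1) - Real.log n : ℝ)) atTop
      (𝓝 eulerMascheroniConstant) := by
  have := tendsto_harmonic_sub_log.add (tendsto_one_div_add_atTop_nhds_zero_nat (𝕜 := ℝ))
  rw [add_zero] at this
  refine this.congr fun n => ?_
  rw [harmonic_succ]
  push_cast
  ring

theorem tprod_weierstrassFactor (z : ℂ) :
    ∏' n, weierstrassFactor n z = cexp (-z * eulerMascheroniConstant) / Complex.Gamma (z + 1) := by
  by_cases hz : ∃ n : ℕ, z = -(n + 1)
  · obtain ⟨n, rfl⟩ := hz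
    rw [tprod_of_exists_eq_zero ⟨n, weierstrassFactor_eq_zero_iff.2 rfl⟩,
      show -((n : ℂ) + 1) + 1 = -n by ring, Complex.Gamma_neg_nat_eq_zero, div_zero]
  push Not at hz
  have hGamma : Complex.Gamma (z + 1) ≠ 0 :=
    Gamma_ne_zero fun n h => hz n (by linear_combination h)
  have hmul : Multipliable (weierstrassFactor · z) :=
    (multipliableLocallyUniformlyOn_weierstrassFactor (‖z‖ + 1)).multipliable (by simp)
  have hlim : Tendsto (fun n : ℕ => (n : ℂ) / (n + 1) *
      cexp (-z * ((harmonic (n + 1) - Real.log n : ℝ) : ℂ)) / Complex.GammaSeq (z + 1) n) atTop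
      (𝓝 (1 * cexp (-z * eulerMascheroniConstant) / Complex.Gamma (z + 1))) :=
    ((tendsto_natCast_div_add_atTop 1).mul ((Complex.continuous_exp.tendsto _).comp
      (((continuous_ofReal.tendsto _).comp tendsto_harmonic_add_one_sub_log).const_mul _))).div
      (Complex.GammaSeq_tendsto_Gamma _) hGamma
  rw [← one_mul (cexp _)]
  refine tendsto_nhds_unique ((tendsto_add_atTop_iff_nat 1).2 hmul.hasProd.tendsto_prod_nat)
    (hlim.congr' ?_)
  filter_upwards [eventually_ne_atTop 0] with n hn
  exact (prod_range_weierstrassFactor hn z).symm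

theorem summable_inv_add_sub_inv {z : ℂ} (hz : ∀ n : ℕ, z ≠ -(n + 1)) :
    Summable fun n : ℕ => (z + (n + 1))⁻¹ - (n + 1 : ℂ)⁻¹ := by
  have hcast : Tendsto (fun n : ℕ => (n : ℂ)) atTop (cobounded ℂ) :=
    tendsto_norm_atTop_iff_cobounded.1 (by simpa using tendsto_natCast_atTop_atTop (R := ℝ))
  have hO (c : ℂ) : (fun n : ℕ => (n + c)⁻¹) =O[atTop] fun n : ℕ => (n : ℝ)⁻¹ := by
    simpa [Function.comp_def] using (isBigO_inv_add_const c).comp_tendsto hcast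
  refine summable_of_isBigO_nat (Real.summable_nat_pow_inv.2 one_lt_two) <|
    ((((hO (1 + z)).mul (hO 1)).const_mul_left (-z)).congr (fun n => ?_) fun n => ?_)
  · have : (n + 1 : ℂ) ≠ 0 := n.cast_add_one_ne_zero
    have : (n + (1 + z) : ℂ) ≠ 0 := fun h => hz n (by linear_combination h)
    rw [show z + (n + 1 : ℂ) = n + (1 + z) by ring]
    field_simp
    ring
  · rw [pow_two, mul_inv]

theorem digamma_add_one_eq_tsum {z : ℂ} (hz : ∀ n : ℕ, z ≠ -(n + 1)) :
    digamma (z + 1) =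
      -eulerMascheroniConstant - ∑' n : ℕ, ((z + (n + 1))⁻¹ - (n + 1 : ℂ)⁻¹) := by
  have hpole (m : ℕ) : z + 1 ≠ -m := fun h => hz m (by linear_combination h)
  have hGamma : Complex.Gamma (z + 1) ≠ 0 := Gamma_ne_zero hpole
  have hdiff : DifferentiableAt ℂ (fun w => Complex.Gamma (w + 1)) z :=
    (differentiableAt_Gamma _ hpole).comp z (by fun_prop)
  have hseries : logDeriv (fun w => ∏' n, weierstrassFactor n w) z =
      ∑' n : ℕ, ((z + (n + 1))⁻¹ - (n + 1 : ℂ)⁻¹) := by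
    rw [logDeriv_tprod_eq_tsum Metric.isOpen_ball (mem_ball_zero_iff.2 (lt_add_one ‖z‖))
      (fun n => weierstrassFactor_eq_zero_iff.not.2 (hz n))
      (fun n => (differentiable_weierstrassFactor n).differentiableOn)
      ((summable_inv_add_sub_inv hz).congr fun n => (logDeriv_weierstrassFactor (hz n)).symm)
      (multipliableLocallyUniformlyOn_weierstrassFactor _)]
    · exact tsum_congr fun n => logDeriv_weierstrassFactor (hz n)
    · rw [tprod_weierstrassFactor]
      exact div_ne_zero (Complex.exp_ne_zero _) hGamma
  have hclosed : logDeriv (fun w => ∏' n, weierstrassFactor n w) z =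
      -eulerMascheroniConstant - digamma (z + 1) := by
    have hshift : logDeriv (fun w => Complex.Gamma (w + 1)) z = digamma (z + 1) := by
      simp only [digamma_def, logDeriv_apply, deriv_comp_add_const]
    simp_rw [tprod_weierstrassFactor]
    rw [logDeriv_div (f := fun w : ℂ => cexp (-w * eulerMascheroniConstant)) z
      (Complex.exp_ne_zero _) hGamma (by fun_prop) hdiff, hshift,
      logDeriv_cexp_comp (by fun_prop), ((hasDerivAt_id' z).fun_neg.mul_const _).deriv, neg_one_mul]
  rw [← hseries, hclosed, sub_sub_cancel]

end Weierstrass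

section Growth

theorem norm_inv_add_sub_inv_le {z : ℂ} {k θ : ℝ} (hz : 0 ≤ z.re) (hk : 0 < k) (hθ0 : 0 ≤ θ)
    (hθ1 : θ ≤ 1) : ‖(z + k)⁻¹ - (k : ℂ)⁻¹‖ ≤ ‖z‖ ^ θ * k ^ (-(1 + θ)) := by
  have hre : k ≤ ‖z + k‖ := calc
    k ≤ (z + k).re := by simpa using hz
    _ ≤ ‖z + k‖ := re_le_norm _
  have hnorm : ‖z‖ ≤ ‖z + k‖ := by
    refine (sq_le_sq₀ (norm_nonneg _) (norm_nonneg _)).1 ?_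
    rw [Complex.sq_norm, Complex.sq_norm, normSq_apply, normSq_apply]
    simp only [add_re, add_im, ofReal_re, ofReal_im, add_zero]
    nlinarith [mul_nonneg hz hk.le]
  have hinterp : ‖z‖ ^ (1 - θ) * k ^ θ ≤ ‖z + k‖ := calc
    ‖z‖ ^ (1 - θ) * k ^ θ ≤ ‖z + k‖ ^ (1 - θ) * ‖z + k‖ ^ θ := by gcongr
    _ = ‖z + k‖ := by
      rw [← Real.rpow_add (hk.trans_le hre), sub_add_cancel, Real.rpow_one]
  have hk0 : (k : ℂ) ≠ 0 := ofReal_ne_zero.2 hk.ne'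
  have hzk : z + k ≠ 0 := norm_pos_iff.1 (hk.trans_le hre)
  calc ‖(z + k)⁻¹ - (k : ℂ)⁻¹‖ = ‖z‖ / (k * ‖z + k‖) := by
        rw [inv_sub_inv hzk hk0, norm_div, norm_mul, norm_real, Real.norm_of_nonneg hk.le,
          sub_add_cancel_right, norm_neg, mul_comm]
    _ ≤ ‖z‖ ^ θ * k ^ (-(1 + θ)) := by
        rw [div_le_iff₀ (mul_pos hk (hk.trans_le hre)), Real.rpow_neg hk.le, Real.rpow_add hk,
          Real.rpow_one]
        calc ‖z‖ = ‖z‖ ^ θ * ‖z‖ ^ (1 - θ) := by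
              rw [← Real.rpow_add_of_nonneg (norm_nonneg z) hθ0 (sub_nonneg.2 hθ1),
                add_sub_cancel, Real.rpow_one]
          _ = ‖z‖ ^ θ * (k * k ^ θ)⁻¹ * (k * (‖z‖ ^ (1 - θ) * k ^ θ)) := by
              have := Real.rpow_pos_of_pos hk θ
              field_simp
          _ ≤ _ := by gcongr

theorem isBigO_digamma_add_one {θ : ℝ} (hθ0 : 0 < θ) (hθ1 : θ ≤ 1) :
    (fun z => digamma (z + 1)) =O[cobounded ℂ ⊓ 𝓟 {z | 0 ≤ z.re}] fun z => ‖z‖ ^ θ := by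
  have hsummable : Summable fun n : ℕ => (n + 1 : ℝ) ^ (-(1 + θ)) := by
    have hexponent : -(1 + θ) < -1 := by linarith
    exact_mod_cast (summable_nat_add_iff 1).2 (Real.summable_nat_rpow.2 hexponent)
  let C := ∑' n : ℕ, (n + 1 : ℝ) ^ (-(1 + θ))
  have hseries {z : ℂ} (hz : 0 ≤ z.re) :
      ‖∑' n : ℕ, ((z + (n + 1))⁻¹ - (n + 1 : ℂ)⁻¹)‖ ≤ C * ‖z‖ ^ θ := by
    rw [mul_comm, ← tsum_mul_left]
    refine tsum_of_norm_bounded (hsummable.mul_left _).hasSum fun n => ?_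
    simpa using norm_inv_add_sub_inv_le hz (n.cast_add_one_pos (α := ℝ)) hθ0.le hθ1
  refine .of_bound (|eulerMascheroniConstant| + C) (eventually_inf_principal.2 ?_)
  filter_upwards [tendsto_norm_cobounded_atTop.eventually_ge_atTop 1] with z hz hre
  have hpole (n : ℕ) : z ≠ -(n + 1) := by
    rintro rfl
    have : (0 : ℝ) ≤ -(n + 1) := by simpa using hre
    linarith [n.cast_nonneg (α := ℝ)]
  rw [digamma_add_one_eq_tsum hpole, Real.norm_of_nonneg (by positivity), add_mul]
  refine (norm_sub_le _ _).trans (add_le_add ?_ (hseries hre))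
  rw [norm_neg, norm_real]
  exact le_mul_of_one_le_right (norm_nonneg _) (Real.one_le_rpow hz hθ0.le)

theorem isLittleO_rpow_rpow_atTop {p q : ℝ} (hpq : p < q) :
    (fun x : ℝ => x ^ p) =o[atTop] fun x => x ^ q := by
  refine isLittleO_of_tendsto' ?_ ((tendsto_rpow_neg_atTop (sub_pos.2 hpq)).congr' ?_)
  · filter_upwards [eventually_gt_atTop 0] with x hx hzero
    exact absurd hzero (Real.rpow_pos_of_pos hx q).ne'
  · filter_upwards [eventually_gt_atTop 0] with x hx
    rw [neg_sub, Real.rpow_sub hx]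

theorem isLittleO_digamma_add_one :
    (fun z => digamma (z + 1)) =o[cobounded ℂ ⊓ 𝓟 {z | 0 ≤ z.re}] fun z => ‖z‖ := by
  have hpow : (fun z : ℂ => ‖z‖ ^ (1 / 2 : ℝ)) =o[cobounded ℂ] fun z => ‖z‖ := by
    simpa [Function.comp_def] using
      (isLittleO_rpow_rpow_atTop one_half_lt_one).comp_tendsto
        (tendsto_norm_cobounded_atTop (E := ℂ))
  exact (isBigO_digamma_add_one one_half_pos one_half_lt_one.le).trans_isLittleO
    (hpow.mono inf_le_left)

theorem isBigO_digamma_I_mul_add_one {θ : ℝ} (hθ0 : 0 < θ) (hθ1 : θ ≤ 1) :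
    (fun x : ℝ => digamma (I * x + 1)) =O[cobounded ℝ] fun x => |x| ^ θ := by
  simpa [Function.comp_def] using (isBigO_digamma_add_one hθ0 hθ1).comp_tendsto
    (tendsto_inf.2 ⟨tendsto_I_mul_ofReal_cobounded,
      tendsto_principal.2 (.of_forall fun x => by simp)⟩)

theorem differentiableOn_digamma : DifferentiableOn ℂ digamma {z | 0 < z.re} := by
  have hpole {z : ℂ} (hz : 0 < z.re) (n : ℕ) : z ≠ -n := by
    rintro rfl
    exact (n.cast_nonneg (α := ℝ)).not_gt (by simpa using hz)
  have hGamma : DifferentiableOn ℂ Complex.Gamma {z | 0 < z.re} := fun z hz =>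
    (differentiableAt_Gamma z (hpole hz)).differentiableWithinAt
  exact (hGamma.deriv (isOpen_re_gt 0)).div hGamma fun z hz => Gamma_ne_zero (hpole hz)

theorem differentiableOn_digamma_add_one :
    DifferentiableOn ℂ (fun z => digamma (z + 1)) {z | 0 ≤ z.re} :=
  differentiableOn_digamma.comp (by fun_prop) fun z hz => by
    simpa using add_pos_of_nonneg_of_pos hz one_pos

end Growth

theorem digammaC_eq_digamma : digammaC = digamma := rfl

theorem poisson_kernel_digamma_general {s : ℂ} (hs : 0 < s.re) :
    (1 / (π : ℂ)) * ∫ x : ℝ, (1 / (s ^ 2 + (x : ℂ) ^ 2)) * digammaC (1 + Complex.I * x) =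
      (1 / s) * digammaC (1 + s) := by
  let f : ℂ → ℂ := fun z => digamma (z + 1)
  have hf : DiffContOnCl ℂ f {z | 0 < z.re} := DifferentiableOn.diffContOnCl <| by
    rw [closure_setOfPred_lt_re]
    exact differentiableOn_digamma_add_one
  have hgrowth : f =o[cobounded ℂ ⊓ 𝓟 {z | 0 ≤ z.re}] fun z => ‖z‖ :=
    isLittleO_digamma_add_one
  have haxis : (fun x : ℝ => f (I * x)) =O[cobounded ℝ] fun x => |x| ^ (1 / 2 : ℝ) :=
    isBigO_digamma_I_mul_add_one one_half_pos one_half_lt_one.le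
  have hcont : Continuous fun x : ℝ => f (I * x) :=
    differentiableOn_digamma_add_one.continuousOn.comp_continuous (by fun_prop) fun x => by simp
  have hpoisson := integral_univ_inv_sq_add_sq_smul hs hf hgrowth
    (integrable_inv_sq_add_sq_smul hs hcont one_half_lt_one haxis)
  simp only [smul_eq_mul, f] at hpoisson
  simp_rw [one_div, add_comm (1 : ℂ), digammaC_eq_digamma]
  rw [hpoisson, ← mul_assoc, mul_div_assoc', inv_mul_cancel₀ (ofReal_ne_zero.2 pi_ne_zero), one_div]

theorem poisson_kernel_digamma (s : ℝ) (hs : 0 < s) :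
    (1 / (π : ℂ)) *
        ∫ x : ℝ, (1 / ((s : ℂ) ^ 2 + (x : ℂ) ^ 2)) * digammaC (1 + Complex.I * x) =
      (1 / (s : ℂ)) * digammaC (1 + s) :=
  poisson_kernel_digamma_general (by simpa using hs)
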